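/- Fix an integer n ≥ 2 and let g ∈ ℚ[s, e] be the unique two-variable polynomial with g(X + Y, X·Y) = X^{n+1} + Y^{n+1}. In R = ℚ[x₁, x₂, x₃, x₄], set π₁₃ = Σ_{a+b=n, a,b≥0} x₁^a x₃^b and π₂₄ = Σ_{a+b=n, a,b≥0} x₂^a x₄^b, let u₁, u₂ ∈ R satisfy u₁·(x₁ + x₂ − x₃ − x₄) = g(x₁ + x₂, x₁x₂) − g(x₃ + x₄, x₁x₂) and u₂·(x₁x₂ − x₃x₄) = g(x₃ + x₄, x₁x₂) − g(x₃ + x₄, x₃x₄), and let a₁ ∈ R satisfy (x₁ − x₃)·(a₁ + u₂) = u₁ + x₁u₂ − π₂₄. Define P₀ = [[π₁₃, x₂ − x₄], [π₂₄, −x₁ + x₃]], P₁ = [[x₁ − x₃, x₂ − x₄], [π₂₄, −π₁₃]], Q₀ = [[u₁, x₁x₂ − x₃x₄], [u₂, −x₁ − x₂ + x₃ + x₄]], Q₁ = [[x₁ + x₂ − x₃ − x₄, x₁x₂ − x₃x₄], [u₂, −u₁]], V₀ = [[1, 0], [−a₁, x₃ − x₂]], and V₁ = [[1, x₂], [1,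 x₃]]. Then V₁·Q₀ = P₀·V₀ and V₀·Q₁ = P₁·V₁; i.e., the pair (V₀, V₁) is a homomorphism of matrix factorizations from (Q₀, Q₁) to (P₀, P₁). -/

import Mathlib

open MvPolynomial

lemma aeval_g_aux (n : ℕ) (g : MvPolynomial (Fin 2) ℚ)
    (hg : aeval ![(X 0 : MvPolynomial (Fin 2) ℚ) + X 1, X 0 * X 1] g
        = (X 0 : MvPolynomial (Fin 2) ℚ) ^ (n + 1) + X 1 ^ (n + 1))
    (p q : MvPolynomial (Fin 4) ℚ) :
    aeval ![p + q, p * q] g = p ^ (n + 1) + q ^ (n + 1) := by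
  have h := congrArg (aeval ![p, q]) hg
  rw [← AlgHom.comp_apply, comp_aeval] at h
  have e : (fun i => (aeval ![p, q]) ((![(X 0 : MvPolynomial (Fin 2) ℚ) + X 1, X 0 * X 1] :
      Fin 2 → MvPolynomial (Fin 2) ℚ) i)) = ![p + q, p * q] := by
    funext i
    fin_cases i <;> simp
  rw [e] at h
  simpa using h

lemma geom_aux (n : ℕ) (p q : MvPolynomial (Fin 4) ℚ) :
    (p - q) * ∑ i ∈ Finset.HasAntidiagonal.antidiagonal n, p ^ i.1 * q ^ i.2
      = p ^ (n + 1) - q ^ (n + 1) := by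
  rw [Finset.Nat.sum_antidiagonal_eq_sum_range_succ (fun a b => p ^ a * q ^ b), mul_comm,
    ← (Commute.all p q).geom_sum₂_mul (n + 1)]
  simp

theorem chi1_hom_of_matrix_factorizations (n : ℕ) (hn : 2 ≤ n)
    (g : MvPolynomial (Fin 2) ℚ)
    (hg : aeval ![(X 0 : MvPolynomial (Fin 2) ℚ) + X 1, X 0 * X 1] g
        = (X 0 : MvPolynomial (Fin 2) ℚ) ^ (n + 1) + X 1 ^ (n + 1))
    (π₁₃ π₂₄ : MvPolynomial (Fin 4) ℚ)
    (h₁₃ : π₁₃ = ∑ p ∈ Finset.HasAntidiagonal.antidiagonal n, X 0 ^ p.1 * X 2 ^ p.2)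
    (h₂₄ : π₂₄ = ∑ p ∈ Finset.HasAntidiagonal.antidiagonal n, X 1 ^ p.1 * X 3 ^ p.2)
    (u₁ u₂ : MvPolynomial (Fin 4) ℚ)
    (hu₁ : u₁ * (X 0 + X 1 - X 2 - X 3)
        = aeval ![(X 0 : MvPolynomial (Fin 4) ℚ) + X 1, X 0 * X 1] g
          - aeval ![(X 2 : MvPolynomial (Fin 4) ℚ) + X 3, X 0 * X 1] g)
    (hu₂ : u₂ * (X 0 * X 1 - X 2 * X 3)
        = aeval ![(X 2 : MvPolynomial (Fin 4) ℚ) + X 3, X 0 * X 1] g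
          - aeval ![(X 2 : MvPolynomial (Fin 4) ℚ) + X 3, X 2 * X 3] g)
    (a₁ : MvPolynomial (Fin 4) ℚ)
    (ha₁ : (X 0 - X 2) * (a₁ + u₂) = u₁ + X 0 * u₂ - π₂₄)
    (P₀ P₁ Q₀ Q₁ V₀ V₁ : Matrix (Fin 2) (Fin 2) (MvPolynomial (Fin 4) ℚ))
    (hP₀ : P₀ = !![π₁₃, X 1 - X 3; π₂₄, -X 0 + X 2])
    (hP₁ : P₁ = !![X 0 - X 2, X 1 - X 3; π₂₄, -π₁₃])
    (hQ₀ : Q₀ = !![u₁, X 0 * X 1 - X 2 * X 3; u₂, -X 0 - X 1 + X 2 + X 3])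
    (hQ₁ : Q₁ = !![X 0 + X 1 - X 2 - X 3, X 0 * X 1 - X 2 * X 3; u₂, -u₁])
    (hV₀ : V₀ = !![1, 0; -a₁, X 2 - X 1])
    (hV₁ : V₁ = !![1, X 1; 1, X 2]) :
    V₁ * Q₀ = P₀ * V₀ ∧ V₀ * Q₁ = P₁ * V₁ := by
  rw [aeval_g_aux n g hg] at hu₁
  rw [aeval_g_aux n g hg] at hu₂
  have g1 := geom_aux n (X 0) (X 2)
  have g2 := geom_aux n (X 1) (X 3)
  rw [← h₁₃] at g1
  rw [← h₂₄] at g2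
  have hne : (X 0 - X 2 : MvPolynomial (Fin 4) ℚ) ≠ 0 := by
    rw [sub_ne_zero]
    intro h
    exact absurd (X_injective h) (by decide)
  have k2 : π₂₄ = u₁ + X 2 * u₂ - (X 0 - X 2) * a₁ := by linear_combination ha₁
  have k1 : π₁₃ = u₁ + X 1 * u₂ + (X 1 - X 3) * a₁ := by
    apply mul_left_cancel₀ hne
    linear_combination g1 + g2 - hu₁ - hu₂ - (X 1 - X 3) * k2
  clear h₁₃ h₂₄ g1 g2 hu₁ hu₂ ha₁
  subst hP₀ hP₁ hQ₀ hQ₁ hV₀ hV₁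
  rw [k1, k2]
  constructor
  · ext1 i j
    fin_cases i <;> fin_cases j <;> simp [Matrix.mul_apply, Fin.sum_univ_two] <;> ring
  · ext1 i j
    fin_cases i <;> fin_cases j <;> simp [Matrix.mul_apply, Fin.sum_univ_two] <;> ring
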